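/- Let n ≥ 2, α_n = 1/2 − 1/(2n), and let ψ ∈ L²(Ω, z dμ) with Ω = ℝⁿ × (0,∞). Define λ ∈ 𝒮'(ℝⁿ) via its Fourier transform λ̂(ξ) = |ξ|² ∫_0^∞ s ψ̂(ξ,s) u₁(s|ξ|^{1/α_n}) ds, where u₁(z) = (1/α_n) K_0(z^{α_n}/α_n), assuming ψ is supported in ℝⁿ × (0,1]. Then λ ∈ L²(ℝⁿ) with ‖λ‖_{L²(ℝⁿ)} ≤ C ‖ψ‖_{L²(Ω, z dμ)} for a constant C depending only on n. -/

import Mathlib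

open MeasureTheory
open scoped FourierTransform

/-- The modified Bessel function of the second kind of order `0`. -/
noncomputable def besselK0 (x : ℝ) : ℝ :=
  ∫ t in Set.Ioi (0 : ℝ), Real.exp (-x * Real.cosh t)

/-- `α_n = 1/2 − 1/(2n)`. -/
noncomputable def alphaN (n : ℕ) : ℝ := 1 / 2 - 1 / (2 * n)

/-- `u₁(z) = (1/α_n) K₀(z^{α_n}/α_n)`. -/
noncomputable def taubU1 (n : ℕ) (z : ℝ) : ℝ :=
  (1 / alphaN n) * besselK0 (z ^ alphaN n / alphaN n)


namespace Stmt8Aux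

theorem cont_fourier {E : Type*} [NormedAddCommGroup E] [InnerProductSpace ℝ E]
    [FiniteDimensional ℝ E] [MeasurableSpace E] [BorelSpace E] (f : E → ℂ) :
    Continuous (𝓕 f) := by
  by_cases hf : Integrable f
  · exact VectorFourier.fourierIntegral_continuous (L := innerₗ E) Real.continuous_fourierChar
      continuous_inner hf
  · have : 𝓕 f = 0 := by
      ext w
      rw [Real.fourier_eq]
      apply integral_undef
      intro h
      exact hf ((VectorFourier.fourierIntegral_convergent_iff (L := innerₗ E)
        Real.continuous_fourierChar continuous_inner w).1 h)
    rw [this]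
    exact continuous_zero

theorem fourier_undef {E : Type*} [NormedAddCommGroup E] [InnerProductSpace ℝ E]
    [FiniteDimensional ℝ E] [MeasurableSpace E] [BorelSpace E] (f : E → ℂ)
    (hf : ¬ Integrable f) : 𝓕 f = 0 := by
  ext w
  rw [Real.fourier_eq]
  apply integral_undef
  intro h
  exact hf ((VectorFourier.fourierIntegral_convergent_iff (L := innerₗ E)
    Real.continuous_fourierChar continuous_inner w).1 h)

open SchwartzMap in
theorem fourier_ae_eq {E : Type*} [NormedAddCommGroup E] [InnerProductSpace ℝ E]
    [FiniteDimensional ℝ E] [MeasurableSpace E] [BorelSpace E] (f : E → ℂ)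
    (hf : Integrable f) (hf2 : MemLp f 2) :
    ∀ᵐ x, (𝓕 (hf2.toLp f) : Lp ℂ 2 (volume : Measure E)) x = 𝓕 f x := by
  apply ae_eq_of_integral_contDiff_smul_eq
  · exact (Lp.memLp _).locallyIntegrable (by norm_num)
  · exact (cont_fourier f).locallyIntegrable
  · intro g g_smooth g_cpt
    have hg₁ : HasCompactSupport (Complex.ofRealCLM ∘ g) := g_cpt.comp_left rfl
    have hg₂ : ContDiff ℝ (⊤ : ℕ∞) (Complex.ofRealCLM ∘ g) := by fun_prop
    set φ : 𝓢(E, ℂ) := hg₁.toSchwartzMap hg₂ with hφ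
    have hφg : ∀ x, φ x = (g x : ℂ) := fun x => by simp [hφ]
    have h1 : ∫ x, g x • (𝓕 (hf2.toLp f) : Lp ℂ 2 (volume : Measure E)) x
        = ((𝓕 (hf2.toLp f) : Lp ℂ 2 (volume : Measure E)) : 𝓢'(E, ℂ)) φ := by
      rw [Lp.toTemperedDistribution_apply]
      simp [hφg]
    rw [h1, ← Lp.fourier_toTemperedDistribution_eq, TemperedDistribution.fourier_apply,
      Lp.toTemperedDistribution_apply]
    have h2 := VectorFourier.integral_fourierIntegral_smul_eq_flip (L := innerₗ E)
      Real.continuous_fourierChar continuous_inner φ.integrable hf (μ := volume) (ν := volume)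
    rw [flip_innerₗ] at h2
    have h3 : ∫ x, (𝓕 φ) x • (hf2.toLp f) x = ∫ x, (𝓕 φ) x • f x := by
      apply integral_congr_ae
      filter_upwards [hf2.coeFn_toLp] with x hx
      rw [hx]
    rw [h3]
    refine Eq.trans ?_ (h2.trans ?_)
    · rfl
    · apply integral_congr_ae
      filter_upwards with x
      rw [hφg]
      rfl

theorem plancherel_le {E : Type*} [NormedAddCommGroup E] [InnerProductSpace ℝ E]
    [FiniteDimensional ℝ E] [MeasurableSpace E] [BorelSpace E] (f : E → ℂ) :
    ∫⁻ x, ‖𝓕 f x‖ₑ ^ 2 ≤ ∫⁻ x, ‖f x‖ₑ ^ 2 := by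
  have key : ∀ g : E → ℂ, ∫⁻ x, ‖g x‖ₑ ^ 2 = eLpNorm g 2 volume ^ 2 := by
    intro g
    have := eLpNorm_nnreal_pow_eq_lintegral (μ := (volume : Measure E)) (f := g)
      (p := 2) (by norm_num)
    simpa using this.symm
  by_cases hf : Integrable f
  swap
  · rw [fourier_undef f hf]
    simp
  by_cases hf2 : MemLp f 2
  swap
  · have : eLpNorm f 2 volume = ⊤ := by
      by_contra h
      exact hf2 ⟨hf.1, lt_top_iff_ne_top.2 h⟩
    rw [key f, this]
    simp
  rw [key, key]
  have h1 := eLpNorm_congr_ae (p := 2) (fourier_ae_eq f hf hf2)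
  have h2 := Lp.norm_fourier_eq (hf2.toLp f)
  rw [Lp.norm_def, Lp.norm_def, ENNReal.toReal_eq_toReal_iff' (Lp.eLpNorm_ne_top _)
    (Lp.eLpNorm_ne_top _)] at h2
  rw [← eLpNorm_congr_ae hf2.coeFn_toLp, ← h2]
  exact (congrArg (· ^ 2) h1.symm).le

theorem bessel_bound_pt (y : ℝ) (hy : 0 < y) (t : ℝ) :
    Real.exp (-y * Real.cosh t) ≤ 8 / y ^ 2 * Real.exp (-2 * t) := by
  have hc : Real.exp t / 2 ≤ Real.cosh t := by
    rw [Real.cosh_eq]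
    have := Real.exp_pos (-t)
    linarith
  set c := Real.cosh t
  have he := Real.exp_pos t
  have hx : 0 ≤ y * c := by positivity
  have h1 := Real.quadratic_le_exp_of_nonneg hx
  have h2 : (y * c) ^ 2 / 2 ≤ Real.exp (y * c) := by linarith
  have h3 : (y * (Real.exp t / 2)) ^ 2 ≤ (y * c) ^ 2 := by gcongr
  have h4 : y ^ 2 * Real.exp t ^ 2 / 8 ≤ Real.exp (y * c) := by nlinarith
  rw [neg_mul, Real.exp_neg, show -2 * t = -(t + t) by ring, Real.exp_neg, Real.exp_add]
  rw [← div_eq_mul_inv, div_div, inv_eq_one_div, div_le_div_iff₀ (by positivity) (by positivity)]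
  nlinarith

theorem exp_int : IntegrableOn (fun t : ℝ => Real.exp (-2 * t)) (Set.Ioi 0) :=
  integrableOn_exp_mul_Ioi (by norm_num) 0

theorem bessel_int (y : ℝ) (hy : 0 < y) :
    IntegrableOn (fun t => Real.exp (-y * Real.cosh t)) (Set.Ioi 0) := by
  refine Integrable.mono' (exp_int.const_mul (8 / y ^ 2)) ?_ ?_
  · exact (by fun_prop : Continuous fun t => Real.exp (-y * Real.cosh t)).aestronglyMeasurable
  · filter_upwards with t
    rw [Real.norm_of_nonneg (Real.exp_pos _).le]
    exact bessel_bound_pt y hy t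

theorem bessel_le (y : ℝ) (hy : 0 < y) : y ^ 2 * besselK0 y ≤ 4 := by
  have h : besselK0 y ≤ ∫ t in Set.Ioi (0 : ℝ), 8 / y ^ 2 * Real.exp (-2 * t) :=
    integral_mono (bessel_int y hy) (exp_int.const_mul _) (bessel_bound_pt y hy)
  rw [integral_const_mul, integral_exp_mul_Ioi (by norm_num)] at h
  have : y ^ 2 * besselK0 y ≤ y ^ 2 * (8 / y ^ 2 * (-Real.exp (-2 * 0) / -2)) := by gcongr
  refine this.trans (le_of_eq ?_)
  field_simp
  norm_num

theorem bessel_pos (y : ℝ) (hy : 0 < y) : 0 < besselK0 y := by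
  unfold besselK0
  rw [setIntegral_pos_iff_support_of_nonneg_ae]
  · have : Function.support (fun t => Real.exp (-y * Real.cosh t)) = Set.univ := by
      ext t
      simp [(Real.exp_pos _).ne']
    rw [this]
    simp
  · filter_upwards with t using (Real.exp_pos _).le
  · exact bessel_int y hy

theorem bessel_meas : Measurable besselK0 := by
  unfold besselK0
  refine StronglyMeasurable.measurable ?_
  refine StronglyMeasurable.integral_prod_right (f := fun (x t : ℝ) => Real.exp (-x * Real.cosh t)) ?_
  refine Continuous.stronglyMeasurable ?_
  simp only [Function.uncurry_def]
  fun_prop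

theorem u1_meas (n : ℕ) : Measurable (taubU1 n) := by
  unfold taubU1
  exact (bessel_meas.comp (by fun_prop)).const_mul _

theorem alpha_pos (n : ℕ) (hn : 2 ≤ n) : 0 < alphaN n := by
  unfold alphaN
  have : (2 : ℝ) ≤ n := by exact_mod_cast hn
  rw [sub_pos, div_lt_div_iff₀ (by positivity) (by positivity)]
  linarith

theorem one_sub_alpha (n : ℕ) : 1 - 2 * alphaN n = 1 / n := by
  unfold alphaN
  by_cases h : (n : ℝ) = 0
  · simp [h]
  field_simp
  ring

theorem u1_pos (n : ℕ) (hn : 2 ≤ n) (z : ℝ) (hz : 0 < z) : 0 < taubU1 n z := by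
  have := alpha_pos n hn
  unfold taubU1
  have := bessel_pos (z ^ alphaN n / alphaN n) (by positivity)
  positivity

theorem u1_le (n : ℕ) (hn : 2 ≤ n) (s : ℝ) (hs : 0 < s) (r : ℝ) (hr : 0 < r) :
    r ^ 2 * s * taubU1 n (s * r ^ ((1 : ℝ) / alphaN n)) ≤ 4 * alphaN n * s ^ (1 / (n : ℝ)) := by
  have ha := alpha_pos n hn
  unfold taubU1
  set a := alphaN n with haa
  have h1 : (s * r ^ (1 / a)) ^ a = s ^ a * r := by
    rw [Real.mul_rpow hs.le (by positivity), ← Real.rpow_mul hr.le]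
    rw [one_div_mul_cancel ha.ne', Real.rpow_one]
  rw [h1]
  have h2 := bessel_le (s ^ a * r / a) (by positivity)
  have h3 : s = s ^ (1 / (n : ℝ)) * (s ^ a) ^ 2 := by
    rw [← one_sub_alpha, ← Real.rpow_natCast, ← Real.rpow_mul hs.le, ← Real.rpow_add hs]
    rw [← haa]
    norm_num
    rw [show 1 - 2 * a + a * 2 = 1 by ring, Real.rpow_one]
  have h4 : r ^ 2 * s * (1 / a * besselK0 (s ^ a * r / a)) =
      a * s ^ (1 / (n : ℝ)) * ((s ^ a * r / a) ^ 2 * besselK0 (s ^ a * r / a)) := by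
    conv_lhs => rw [h3]
    have h5 : (s ^ (1 / (n : ℝ)) * (s ^ a) ^ 2) ^ a = s ^ a := by rw [← h3]
    rw [h5]
    field_simp
  rw [h4]
  have : 0 ≤ a * s ^ (1 / (n : ℝ)) := by positivity
  nlinarith

theorem carath {E : Type*} [NormedAddCommGroup E] [InnerProductSpace ℝ E]
    [FiniteDimensional ℝ E] [MeasurableSpace E] [BorelSpace E] (F : E → ℝ → ℂ)
    (hc : ∀ s, Continuous fun ξ => F ξ s) (ν : Measure ℝ) :
    MeasurableSet {ξ | AEStronglyMeasurable (F ξ) ν} ∧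
    ∃ G : E × ℝ → ℂ, Measurable G ∧
      ∀ᵐ s ∂ν, ∀ ξ ∈ {ξ | AEStronglyMeasurable (F ξ) ν}, F ξ s = G (ξ, s) := by
  set M : Set E := {ξ | AEStronglyMeasurable (F ξ) ν} with hM
  have hcl : IsClosed M := by
    apply IsSeqClosed.isClosed
    intro x ξ hx hlim
    refine aestronglyMeasurable_of_tendsto_ae Filter.atTop (f := fun n => F (x n)) hx ?_
    filter_upwards with s
    exact ((hc s).tendsto ξ).comp hlim
  refine ⟨hcl.measurableSet, ?_⟩
  rcases M.eq_empty_or_nonempty with h0 | h0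
  · refine ⟨0, measurable_zero, ?_⟩
    filter_upwards with s ξ hξ
    simp [h0] at hξ
  haveI : Nonempty M := h0.to_subtype
  haveI : SecondCountableTopology E := inferInstance
  let D : ℕ → M := TopologicalSpace.denseSeq M
  have hD : ∀ k, AEStronglyMeasurable (F (D k)) ν := fun k => (D k).2
  have hae : ∀ᵐ s ∂ν, ∀ k, F (D k) s = (hD k).mk _ s := ae_all_iff.2 fun k => (hD k).ae_eq_mk
  obtain ⟨t, hts, htm, ht0⟩ := exists_measurable_superset_of_null (ae_iff.1 hae)
  have ht : ∀ s, s ∉ t → ∀ k, F (D k) s = (hD k).mk _ s := by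
    intro s hs
    by_contra h
    exact hs (hts h)
  let F' : M → ℝ → ℂ := fun m => tᶜ.indicator (F m)
  have hF'c : ∀ s, Continuous fun m => F' m s := by
    intro s
    by_cases hs : s ∈ tᶜ
    · simp only [F', Set.indicator_of_mem hs]
      exact (hc s).comp continuous_subtype_val
    · simp only [F', Set.indicator_of_notMem hs]
      exact continuous_const
  have hF'D : ∀ k, StronglyMeasurable (F' (D k)) := by
    intro k
    have : F' (D k) = tᶜ.indicator ((hD k).mk _) := by
      ext s
      by_cases hs : s ∈ tᶜ
      · simp only [F', Set.indicator_of_mem hs]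
        exact ht s hs k
      · simp only [F', Set.indicator_of_notMem hs]
    rw [this]
    exact (hD k).stronglyMeasurable_mk.indicator htm.compl
  have hF'm : ∀ m, StronglyMeasurable (F' m) := by
    intro m
    obtain ⟨x, hx, hlim⟩ := mem_closure_iff_seq_limit.1
      ((TopologicalSpace.denseRange_denseSeq M) m)
    refine stronglyMeasurable_of_tendsto Filter.atTop (f := fun n => F' (x n)) ?_ ?_
    · intro n
      obtain ⟨k, hk⟩ := hx n
      rw [← hk]
      exact hF'D k
    · rw [tendsto_pi_nhds]
      intro s
      exact ((hF'c s).tendsto m).comp hlim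
  have hjoint := stronglyMeasurable_uncurry_of_continuous_of_stronglyMeasurable hF'c hF'm
  classical
  let m0 : M := Classical.arbitrary M
  let r : E → M := fun ξ => if h : ξ ∈ M then ⟨ξ, h⟩ else m0
  have hr : Measurable r :=
    Measurable.dite (measurable_id) (measurable_const) hcl.measurableSet
  refine ⟨fun p => F' (r p.1) p.2, ?_, ?_⟩
  · exact hjoint.measurable.comp ((hr.comp measurable_fst).prodMk measurable_snd)
  · have : ∀ᵐ s ∂ν, s ∉ t := measure_eq_zero_iff_ae_notMem.1 ht0
    filter_upwards [this] with s hs ξ hξ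
    have h1 : r ξ = ⟨ξ, hξ⟩ := by simp [r, hξ]
    have h2 : s ∈ tᶜ := hs
    simp only [h1, F', Set.indicator_of_mem h2]

/-- The Cauchy-Schwarz weight. -/
noncomputable def wt (n : ℕ) (s : ℝ) : ENNReal :=
  ENNReal.ofReal (4 * alphaN n * s ^ (1 / (n : ℝ) - 1 / 2))

/-- The Cauchy-Schwarz constant. -/
noncomputable def KK (n : ℕ) : ENNReal := ∫⁻ s in Set.Ioc (0 : ℝ) 1, wt n s ^ 2

theorem KK_ne_top (n : ℕ) (hn : 2 ≤ n) : KK n ≠ ⊤ := by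
  have ha := alpha_pos n hn
  have hn0 : (0 : ℝ) < n := by positivity
  have hi : IntegrableOn (fun s : ℝ => (4 * alphaN n) ^ 2 * s ^ (2 / (n : ℝ) - 1))
      (Set.Ioc (0 : ℝ) 1) := by
    refine Integrable.const_mul ?_ _
    have := (intervalIntegral.intervalIntegrable_rpow' (a := 0) (b := 1)
      (r := 2 / (n : ℝ) - 1) (by have : 0 < 2 / (n : ℝ) := by positivity
                                 linarith))
    rwa [intervalIntegrable_iff_integrableOn_Ioc_of_le zero_le_one] at this
  have : KK n = ∫⁻ s in Set.Ioc (0 : ℝ) 1,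
      ENNReal.ofReal ((4 * alphaN n) ^ 2 * s ^ (2 / (n : ℝ) - 1)) := by
    unfold KK wt
    apply setLIntegral_congr_fun measurableSet_Ioc
    intro s hs
    have hs0 := hs.1
    dsimp only
    rw [← ENNReal.ofReal_pow (by positivity), mul_pow, ← Real.rpow_natCast (s ^ _),
      ← Real.rpow_mul hs0.le]
    congr 3
    push_cast
    ring
  rw [this]
  exact (hi.lintegral_lt_top).ne

theorem pointwise_bound (n : ℕ) (hn : 2 ≤ n) (r : ℝ) (hr : 0 < r) (h : ℝ → ℂ)
    (hm : AEStronglyMeasurable h (volume.restrict (Set.Ioi (0 : ℝ))))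
    (h0 : ∀ s, s ∉ Set.Ioc (0 : ℝ) 1 → h s = 0) :
    ‖((r : ℂ) ^ 2) * ∫ s in Set.Ioi (0 : ℝ),
        (s : ℂ) * h s * (taubU1 n (s * r ^ ((1 : ℝ) / alphaN n)) : ℝ)‖ₑ ^ 2
      ≤ KK n * ∫⁻ s in Set.Ioc (0 : ℝ) 1, ENNReal.ofReal s * ‖h s‖ₑ ^ 2 := by
  have ha := alpha_pos n hn
  have hm' : AEStronglyMeasurable h (volume.restrict (Set.Ioc (0 : ℝ) 1)) :=
    hm.mono_measure (Measure.restrict_mono Set.Ioc_subset_Ioi_self le_rfl)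
  have h1 : ∫ s in Set.Ioi (0 : ℝ),
        (s : ℂ) * h s * (taubU1 n (s * r ^ ((1 : ℝ) / alphaN n)) : ℝ) =
      ∫ s in Set.Ioc (0 : ℝ) 1,
        (s : ℂ) * h s * (taubU1 n (s * r ^ ((1 : ℝ) / alphaN n)) : ℝ) := by
    apply setIntegral_eq_of_subset_of_forall_sdiff_eq_zero measurableSet_Ioi
      Set.Ioc_subset_Ioi_self
    intro s hs
    simp [h0 s hs.2]
  rw [h1, ← integral_const_mul]
  have h2 : ‖∫ s in Set.Ioc (0 : ℝ) 1, (r : ℂ) ^ 2 *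
      ((s : ℂ) * h s * (taubU1 n (s * r ^ ((1 : ℝ) / alphaN n)) : ℝ))‖ₑ ≤
      ∫⁻ s in Set.Ioc (0 : ℝ) 1,
        ((wt n) * (fun s => ENNReal.ofReal (s ^ (1 / 2 : ℝ)) * ‖h s‖ₑ)) s := by
    refine (enorm_integral_le_lintegral_enorm _).trans ?_
    apply setLIntegral_mono' measurableSet_Ioc
    intro s hs
    have hs0 := hs.1
    have hu := u1_pos n hn (s * r ^ ((1 : ℝ) / alphaN n)) (by positivity)
    have hl := u1_le n hn s hs0 r hr
    simp only [Pi.mul_apply, wt]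
    rw [← mul_assoc (ENNReal.ofReal _), ← ENNReal.ofReal_mul (by positivity), ← ofReal_norm,
      ← ofReal_norm, ← ENNReal.ofReal_mul (by positivity)]
    apply ENNReal.ofReal_le_ofReal
    rw [mul_assoc (4 * alphaN n), ← Real.rpow_add hs0]
    simp only [norm_mul, norm_pow, Complex.norm_real, Real.norm_of_nonneg hr.le,
      Real.norm_of_nonneg hs0.le, Real.norm_of_nonneg hu.le]
    rw [sub_add_cancel]
    have := mul_le_mul_of_nonneg_right hl (norm_nonneg (h s))
    linarith
  have h3 := ENNReal.lintegral_mul_le_Lp_mul_Lq (volume.restrict (Set.Ioc (0 : ℝ) 1))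
    Real.HolderConjugate.two_two (f := wt n)
    (g := fun s => ENNReal.ofReal (s ^ (1 / 2 : ℝ)) * ‖h s‖ₑ)
    (by unfold wt; exact (by fun_prop : Measurable _).aemeasurable)
    ((by fun_prop : Measurable fun s : ℝ => ENNReal.ofReal (s ^ (1 / 2 : ℝ))).aemeasurable.mul
      hm'.enorm)
  have h4 := pow_le_pow_left₀ zero_le (h2.trans h3) 2
  refine h4.trans ?_
  have hsq : ∀ x : ENNReal, (x ^ (1 / 2 : ℝ)) ^ 2 = x := by
    intro x
    rw [← ENNReal.rpow_natCast, ← ENNReal.rpow_mul]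
    norm_num
  rw [mul_pow, hsq, hsq]
  simp only [ENNReal.rpow_two]
  unfold KK
  refine mul_le_mul_right ?_ _
  apply setLIntegral_mono' measurableSet_Ioc
  intro s hs
  have hs0 := hs.1
  rw [mul_pow, ← ENNReal.ofReal_pow (by positivity), ← Real.rpow_natCast, ← Real.rpow_mul hs0.le]
  norm_num

theorem pointwise_bound' (n : ℕ) (hn : 2 ≤ n) (r : ℝ) (hr : 0 ≤ r) (h : ℝ → ℂ)
    (h0 : ∀ s, s ∉ Set.Ioc (0 : ℝ) 1 → h s = 0)
    (hm : ¬ AEStronglyMeasurable h (volume.restrict (Set.Ioi (0 : ℝ)))) :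
    ((r : ℂ) ^ 2) * ∫ s in Set.Ioi (0 : ℝ),
        (s : ℂ) * h s * (taubU1 n (s * r ^ ((1 : ℝ) / alphaN n)) : ℝ) = 0 := by
  rcases hr.eq_or_lt with hr | hr
  · simp [← hr]
  rw [integral_undef, mul_zero]
  intro hi
  apply hm
  have h1 : Measurable fun s : ℝ =>
      ((s : ℂ) * (taubU1 n (s * r ^ ((1 : ℝ) / alphaN n)) : ℝ))⁻¹ := by
    have := (u1_meas n).comp (measurable_id.mul_const (r ^ ((1 : ℝ) / alphaN n)))
    exact ((Complex.measurable_ofReal).mul (Complex.measurable_ofReal.comp this)).inv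
  refine (hi.1.mul h1.aestronglyMeasurable).congr ?_
  filter_upwards [ae_restrict_mem measurableSet_Ioi] with s hs
  have hs0 : 0 < s := hs
  have hu := u1_pos n hn (s * r ^ ((1 : ℝ) / alphaN n)) (by positivity)
  have e1 : (s : ℂ) ≠ 0 := by exact_mod_cast hs0.ne'
  have e2 : ((taubU1 n (s * r ^ ((1 : ℝ) / alphaN n)) : ℝ) : ℂ) ≠ 0 := by exact_mod_cast hu.ne'
  simp only [Pi.mul_apply]
  field_simp

end Stmt8Aux

/-- For `ψ ∈ L²(Ω, z dμ)` supported in `ℝⁿ × (0,1]`, the function `λ` defined via its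
Fourier transform `λ̂(ξ) = |ξ|² ∫₀^∞ s ψ̂(ξ,s) u₁(s |ξ|^{1/α_n}) ds` lies in `L²(ℝⁿ)` with
`‖λ‖_{L²} ≤ C ‖ψ‖_{L²(Ω, z dμ)}`, with `C` depending only on `n`. -/
theorem stmt8 (n : ℕ) (hn : 2 ≤ n) :
    ∃ C > (0 : ℝ), ∀ ψ ψhat : EuclideanSpace ℝ (Fin n) × ℝ → ℂ,
      (∀ s : ℝ, (fun ξ => ψhat (ξ, s)) = 𝓕 (fun x => ψ (x, s))) →
      (∀ (x : EuclideanSpace ℝ (Fin n)) (s : ℝ), s ∉ Set.Ioc (0 : ℝ) 1 → ψ (x, s) = 0) →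
      IntegrableOn (fun p => ‖ψ p‖ ^ 2 * p.2) {p | 0 < p.2} →
      (∫⁻ ξ : EuclideanSpace ℝ (Fin n),
          ENNReal.ofReal
            (‖(‖ξ‖ ^ 2 : ℂ) * ∫ s in Set.Ioi (0 : ℝ),
                (s : ℂ) * ψhat (ξ, s) * (taubU1 n (s * ‖ξ‖ ^ ((1 : ℝ) / alphaN n)) : ℝ)‖ ^ 2))
        ≤ ENNReal.ofReal
            (C * ∫ p in {p : EuclideanSpace ℝ (Fin n) × ℝ | 0 < p.2}, ‖ψ p‖ ^ 2 * p.2) := by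
  refine ⟨(Stmt8Aux.KK n).toReal + 1, by positivity, ?_⟩
  intro ψ ψhat hhat hsupp hint
  have hK := Stmt8Aux.KK_ne_top n hn
  set K := Stmt8Aux.KK n with hKdef
  have hcont : ∀ s, Continuous fun ξ => ψhat (ξ, s) := by
    intro s
    rw [hhat s]
    exact Stmt8Aux.cont_fourier _
  have hzero : ∀ ξ s, s ∉ Set.Ioc (0 : ℝ) 1 → ψhat (ξ, s) = 0 := by
    intro ξ s hs
    have h1 : (fun x => ψ (x, s)) = fun _ => 0 := by
      ext x
      exact hsupp x s hs
    have h2 := congrFun (hhat s) ξ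
    rw [h1] at h2
    simpa [Real.fourier_eq] using h2
  obtain ⟨hM, G, hG, hFG⟩ := Stmt8Aux.carath (fun ξ s => ψhat (ξ, s)) hcont
    (volume.restrict (Set.Ioi (0 : ℝ)))
  set M := {ξ | AEStronglyMeasurable (fun s => ψhat (ξ, s))
    (volume.restrict (Set.Ioi (0 : ℝ)))} with hMdef
  have hFG' : ∀ᵐ s ∂(volume.restrict (Set.Ioc (0 : ℝ) 1)), ∀ ξ ∈ M, ψhat (ξ, s) = G (ξ, s) :=
    ae_mono (Measure.restrict_mono Set.Ioc_subset_Ioi_self le_rfl) hFG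
  calc _ ≤ ∫⁻ ξ, M.indicator (fun ξ => K * ∫⁻ s in Set.Ioc (0 : ℝ) 1,
            ENNReal.ofReal s * ‖G (ξ, s)‖ₑ ^ 2) ξ := by
        apply lintegral_mono
        intro ξ
        dsimp only
        rw [ENNReal.ofReal_pow (norm_nonneg _), ofReal_norm_eq_enorm]
        by_cases hξ : ξ ∈ M
        · rw [Set.indicator_of_mem hξ]
          rcases (norm_nonneg ξ).eq_or_lt with h | h
          · simp [← h]
          · refine (Stmt8Aux.pointwise_bound n hn ‖ξ‖ h (fun s => ψhat (ξ, s)) hξ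
              (hzero ξ)).trans (le_of_eq ?_)
            congr 1
            apply lintegral_congr_ae
            filter_upwards [hFG'] with s hs
            rw [hs ξ hξ]
        · rw [Stmt8Aux.pointwise_bound' n hn ‖ξ‖ (norm_nonneg _) (fun s => ψhat (ξ, s))
            (hzero ξ) hξ]
          simp
    _ = K * ∫⁻ ξ in M, ∫⁻ s in Set.Ioc (0 : ℝ) 1, ENNReal.ofReal s * ‖G (ξ, s)‖ₑ ^ 2 := by
        rw [lintegral_indicator hM, lintegral_const_mul' _ _ hK]
    _ = K * ∫⁻ s in Set.Ioc (0 : ℝ) 1, ∫⁻ ξ in M, ENNReal.ofReal s * ‖G (ξ, s)‖ₑ ^ 2 := by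
        rw [lintegral_lintegral_swap]
        refine Measurable.aemeasurable ?_
        simp only [Function.uncurry_def]
        fun_prop
    _ ≤ K * ∫⁻ s in Set.Ioc (0 : ℝ) 1, ∫⁻ x, ENNReal.ofReal (‖ψ (x, s)‖ ^ 2 * s) := by
        refine mul_le_mul_right ?_ _
        apply lintegral_mono_ae
        filter_upwards [hFG', ae_restrict_mem measurableSet_Ioc] with s hs hs1
        have e1 : ∀ x, ENNReal.ofReal (‖ψ (x, s)‖ ^ 2 * s)
            = ENNReal.ofReal s * ‖ψ (x, s)‖ₑ ^ 2 := by
          intro x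
          rw [mul_comm, ENNReal.ofReal_mul hs1.1.le, ENNReal.ofReal_pow (norm_nonneg _),
            ofReal_norm_eq_enorm]
        simp only [e1]
        rw [lintegral_const_mul' _ _ ENNReal.ofReal_ne_top,
          lintegral_const_mul' _ _ ENNReal.ofReal_ne_top]
        refine mul_le_mul_right ?_ _
        calc ∫⁻ ξ in M, ‖G (ξ, s)‖ₑ ^ 2 = ∫⁻ ξ in M, ‖ψhat (ξ, s)‖ₑ ^ 2 := by
              apply setLIntegral_congr_fun hM
              intro ξ hξ
              dsimp only
              rw [hs ξ hξ]
          _ ≤ ∫⁻ ξ, ‖ψhat (ξ, s)‖ₑ ^ 2 := setLIntegral_le_lintegral _ _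
          _ = ∫⁻ ξ, ‖𝓕 (fun x => ψ (x, s)) ξ‖ₑ ^ 2 := by rw [← hhat s]
          _ ≤ _ := Stmt8Aux.plancherel_le _
    _ ≤ K * ∫⁻ s in Set.Ioi (0 : ℝ), ∫⁻ x, ENNReal.ofReal (‖ψ (x, s)‖ ^ 2 * s) := by
        refine mul_le_mul_right ?_ _
        exact lintegral_mono_set Set.Ioc_subset_Ioi_self
    _ = K * ∫⁻ p in {p : EuclideanSpace ℝ (Fin n) × ℝ | 0 < p.2},
          ENNReal.ofReal (‖ψ p‖ ^ 2 * p.2) := by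
        have e : (volume : Measure (EuclideanSpace ℝ (Fin n) × ℝ)).restrict {p | 0 < p.2}
            = (volume : Measure (EuclideanSpace ℝ (Fin n))).prod
              (volume.restrict (Set.Ioi (0 : ℝ))) := by
          have : {p : EuclideanSpace ℝ (Fin n) × ℝ | 0 < p.2} = Set.univ ×ˢ Set.Ioi 0 := by
            ext p
            simp
          rw [this, Measure.volume_eq_prod, ← Measure.prod_restrict, Measure.restrict_univ]
        unfold IntegrableOn at hint
        rw [e] at hint ⊢
        rw [lintegral_prod_symm _ hint.1.aemeasurable.ennreal_ofReal]
    _ = K * ENNReal.ofReal (∫ p in {p : EuclideanSpace ℝ (Fin n) × ℝ | 0 < p.2},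
          ‖ψ p‖ ^ 2 * p.2) := by
        rw [ofReal_integral_eq_lintegral_ofReal hint]
        have hms : MeasurableSet {p : EuclideanSpace ℝ (Fin n) × ℝ | 0 < p.2} :=
          measurableSet_lt measurable_const measurable_snd
        filter_upwards [ae_restrict_mem hms] with p hp
        have : 0 < p.2 := hp
        dsimp only [Pi.zero_apply]
        positivity
    _ ≤ _ := by
        rw [ENNReal.ofReal_mul (by positivity)]
        gcongr
        rw [← ENNReal.ofReal_toReal hK]
        apply ENNReal.ofReal_le_ofReal
        rw [ENNReal.toReal_ofReal (by positivity)]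
        linarith
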